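/- For every δ > 0 there is N ∈ ℕ such that the following holds. Let G be a finite abelian group of order n ≥ N, let p be a real with n^{−1/700} ≤ p ≤ 1, and let R be a p-random subset of G. Then with probability at least 1 − δ the following event holds: for every k ≥ 1, every set S ⊆ G × ℤ^k of at most 100 words each of which is linear in at least one variable, and every U ⊆ G with |U| ≤ p^{100}·n/1000, there exists a function f : {1,…,k} → G such that f separates S, π_f(S) ∩ U = ∅, and π_f(S) ⊆ R. -/

import Mathlib

open scoped Classical

/-- The probability that a `p`-random subset of the finite type `G` (each element included
independently with probability `p`) equals the finset `A`. -/
noncomputable def setProb (G : Type) [Fintype G] [DecidableEq G] (p : ℝ) (A : Finset G) : ℝ :=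
  p ^ A.card * (1 - p) ^ (Fintype.card G - A.card)

/-- The projection of the word `w = (g, z) ∈ G × ℤᵏ` under `f : Fin k → G`, namely
`g + ∑ i, z i • f i`. -/
def proj {G : Type} [AddCommGroup G] {k : ℕ} (f : Fin k → G) (w : G × (Fin k → ℤ)) : G :=
  w.1 + ∑ i, w.2 i • f i

/-- Two words `w, w'` with difference `(g, z)` are separable if (a) `z i ∈ {1,-1}` for
some `i`, or (b) `z = 0` and `g ≠ 0`, or (c) `z = 3eᵢ - 2eⱼ` or `z = 2eⱼ - 3eᵢ` for some
`i ≠ j`. -/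
def Separable {G : Type} [AddCommGroup G] {k : ℕ} (w w' : G × (Fin k → ℤ)) : Prop :=
  (∃ i, (w - w').2 i = 1 ∨ (w - w').2 i = -1) ∨
  ((w - w').2 = 0 ∧ (w - w').1 ≠ 0) ∨
  (∃ i j, i ≠ j ∧
    ((w - w').2 = Pi.single i (3 : ℤ) - Pi.single j (2 : ℤ) ∨
     (w - w').2 = Pi.single j (2 : ℤ) - Pi.single i (3 : ℤ)))

/-- `f` separates `S` if the projections under `f` of every separable pair of distinct
words of `S` are distinct. -/
def SeparatesSet {G : Type} [AddCommGroup G] {k : ℕ} (f : Fin k → G)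
    (S : Finset (G × (Fin k → ℤ))) : Prop :=
  ∀ w ∈ S, ∀ w' ∈ S, w ≠ w' → Separable w w' → proj f w ≠ proj f w'

/-!
Only boundedly many variables matter: choose, for each of `m` linear words, a variable in which it
is linear. Varying `f` in these variables alone turns the words into an `m`-tuple of linear words in
`m` variables, so if every such tuple is mapped into `R` by more than a proportion `a` of the
functions, then by averaging over translates the same holds for words in any number of variables.
Since coefficients matter only modulo `n = |G|`, there are at most `n ^ ((m + 1) * m)` tuples to
consider. The projection of a linear word is equidistributed, hence the number of `f` mapping a
given tuple into `R` is a function of `R` with small differences and mean at least `p ^ m * n ^ m`.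
By McDiarmid's inequality and a union bound, with high probability every tuple is mapped into `R` by
nearly a proportion `p ^ m` of the functions.

This exceeds the proportion of functions that fail to separate `S` or hit `U`. The difference of two
separable words is either a nonzero constant or has coprime coefficients (`3 * 1 - 2 * 1 = 1`). In
the second case its projection is equidistributed, so each pair is identified by a proportion
`1 / n` of the functions at most; likewise a linear word is projected into `U` by a proportion
`|U| / n` of them.
-/

section RandomSubset

open Finset

/-- The mean of `F` over a `p`-random subset of `s`, as a linear functional of `F`. -/
noncomputable def subsetMean {α : Type*} (p : ℝ) (s : Finset α) : (Finset α → ℝ) →ₗ[ℝ] ℝ :=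
  ∑ A ∈ s.powerset, (p ^ #A * (1 - p) ^ (#s - #A)) • LinearMap.proj A

/-- The probability that a `p`-random subset of `s` lies in the event `E`. -/
noncomputable def subsetProb {α : Type*} (p : ℝ) (s : Finset α) (E : Set (Finset α)) : ℝ :=
  subsetMean p s (E.indicator 1)

variable {α : Type*} {p : ℝ} {s : Finset α} {F F' : Finset α → ℝ} {E E' : Set (Finset α)}

lemma subsetMean_apply (p : ℝ) (s : Finset α) (F : Finset α → ℝ) :
    subsetMean p s F = ∑ A ∈ s.powerset, p ^ #A * (1 - p) ^ (#s - #A) * F A := by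
  simp [subsetMean, LinearMap.sum_apply]

lemma sum_ite_setProb {G : Type} [Fintype G] [DecidableEq G] (p : ℝ) (E : Finset G → Prop)
    [DecidablePred E] :
    ∑ R : Finset G, (if E R then setProb G p R else 0) = subsetProb p univ {R | E R} := by
  simp [subsetProb, subsetMean_apply, setProb, Set.indicator_apply]

lemma subsetMean_empty : subsetMean p ∅ F = F ∅ := by
  simp [subsetMean_apply]

lemma subsetMean_insert {a : α} (ha : a ∉ s) :
    subsetMean p (insert a s) F =
      subsetMean p s fun A ↦ p * F (insert a A) + (1 - p) * F A := by
  simp only [subsetMean_apply]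
  rw [sum_powerset_insert ha, ← sum_add_distrib]
  refine sum_congr rfl fun A hA ↦ ?_
  have hAs : A ⊆ s := mem_powerset.1 hA
  rw [card_insert_of_notMem ha, card_insert_of_notMem fun h ↦ ha (hAs h),
    Nat.sub_add_comm (card_le_card hAs), Nat.add_sub_add_right]
  ring

lemma subsetMean_mono (hp : p ∈ Set.Icc (0 : ℝ) 1) (h : F ≤ F') :
    subsetMean p s F ≤ subsetMean p s F' := by
  simp only [subsetMean_apply]
  exact sum_le_sum fun A _ ↦ mul_le_mul_of_nonneg_left (h A)
    (mul_nonneg (pow_nonneg hp.1 _) (pow_nonneg (sub_nonneg.2 hp.2) _))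

lemma subsetMean_one : subsetMean p s 1 = 1 := by
  simp [subsetMean_apply, sum_pow_mul_eq_add_pow]

lemma subsetProb_mono (hp : p ∈ Set.Icc (0 : ℝ) 1) (h : E ⊆ E') :
    subsetProb p s E ≤ subsetProb p s E' :=
  subsetMean_mono hp (Set.indicator_le_indicator_of_subset h fun _ ↦ zero_le_one)

lemma subsetProb_compl : subsetProb p s Eᶜ = 1 - subsetProb p s E := by
  rw [subsetProb, Set.indicator_compl, map_sub, subsetMean_one, subsetProb]

lemma subsetProb_biUnion_le {T : Type*} (hp : p ∈ Set.Icc (0 : ℝ) 1) (I : Finset T)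
    (E : T → Set (Finset α)) :
    subsetProb p s (⋃ t ∈ I, E t) ≤ ∑ t ∈ I, subsetProb p s (E t) := by
  simp only [subsetProb]
  rw [← map_sum]
  refine subsetMean_mono hp fun A ↦ ?_
  have hnonneg (t : T) : 0 ≤ (E t).indicator (1 : Finset α → ℝ) A :=
    Set.indicator_nonneg (fun _ _ ↦ zero_le_one) A
  rw [Finset.sum_apply]
  refine Set.indicator_apply_le' (fun hA ↦ ?_) fun _ ↦ sum_nonneg fun t _ ↦ hnonneg t
  obtain ⟨t, ht, hAt⟩ := Set.mem_iUnion₂.1 hA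
  calc (1 : Finset α → ℝ) A = (E t).indicator 1 A := (Set.indicator_of_mem hAt _).symm
    _ ≤ ∑ t ∈ I, (E t).indicator 1 A := single_le_sum (fun t _ ↦ hnonneg t) ht

lemma subsetProb_superset {B : Finset α} (hB : B ⊆ s) :
    subsetProb p s {A | B ⊆ A} = p ^ #B := by
  -- Expand `∏ i ∈ s, (p + q i)`, where `q` is `0` on `B` and `1 - p` elsewhere.
  have hexpand := prod_add (fun _ ↦ p) (fun i ↦ if i ∈ B then 0 else 1 - p) s
  have hprod : ∏ i ∈ s, (p + if i ∈ B then 0 else 1 - p) = p ^ #B := by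
    rw [← prod_const, ← prod_subset hB fun i _ hi ↦ by simp [hi]]
    exact prod_congr rfl fun i hi ↦ by simp [hi]
  rw [← hprod, hexpand, subsetProb, subsetMean_apply]
  refine sum_congr rfl fun A hA ↦ ?_
  rw [mul_assoc, prod_const]
  congr 1
  by_cases hBA : B ⊆ A
  · rw [Set.indicator_of_mem hBA, Pi.one_apply, mul_one,
      ← card_sdiff_of_subset (mem_powerset.1 hA), ← prod_const]
    exact prod_congr rfl fun i hi ↦ (if_neg fun hiB ↦ (mem_sdiff.1 hi).2 (hBA hiB)).symm
  · obtain ⟨b, hbB, hbA⟩ := not_subset.1 hBA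
    rw [prod_eq_zero (mem_sdiff.2 ⟨hB hbB, hbA⟩) (by rw [if_pos hbB]), Set.indicator_of_notMem,
      mul_zero]
    exact hBA

open MeasureTheory ProbabilityTheory in
lemma hoeffding_two_point (hp : p ∈ Set.Icc (0 : ℝ) 1) {x y c : ℝ} (hxy : |x - y| ≤ c) :
    p * Real.exp (p * x + (1 - p) * y - x) + (1 - p) * Real.exp (p * x + (1 - p) * y - y) ≤
      Real.exp (c ^ 2 / 8) := by
  let μ : Measure ℝ := bernoulliMeasure x y ⟨p, hp⟩
  have hint (f : ℝ → ℝ) : ∫ ω, f ω ∂μ = p * f x + (1 - p) * f y := by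
    simp [μ, integral_bernoulliMeasure]
  have hmem : ∀ᵐ ω ∂μ, id ω ∈ Set.Icc (min x y) (max x y) :=
    (mem_ae_iff_prob_eq_one measurableSet_Icc).2 <|
      bernoulliMeasure_apply_of_mem_of_mem _ measurableSet_Icc
        ⟨min_le_left x y, le_max_left x y⟩ ⟨min_le_right x y, le_max_right x y⟩
  have hmgf : p * Real.exp (p * x + (1 - p) * y - x) +
      (1 - p) * Real.exp (p * x + (1 - p) * y - y) ≤ Real.exp ((|x - y| / 2) ^ 2 / 2) := by
    simpa [mgf, hint, max_sub_min_eq_abs'] using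
      (hasSubgaussianMGF_of_mem_Icc aemeasurable_id hmem).mgf_le (-1)
  have hsq : |x - y| ^ 2 ≤ c ^ 2 := pow_le_pow_left₀ (abs_nonneg _) hxy 2
  exact hmgf.trans (Real.exp_le_exp.2 (by linarith))

lemma subsetMean_exp_sub_le {c : α → ℝ} (hp : p ∈ Set.Icc (0 : ℝ) 1)
    (hF : ∀ a ∈ s, ∀ A, |F (insert a A) - F A| ≤ c a) :
    subsetMean p s (fun A ↦ Real.exp (subsetMean p s F - F A)) ≤
      Real.exp ((∑ a ∈ s, c a ^ 2) / 8) := by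
  induction s using Finset.induction_on generalizing F with
  | empty => simp [subsetMean_empty]
  | insert a s ha ih =>
    -- Conditioning on whether `a` belongs to the random subset turns `F` into `Y`.
    set Y : Finset α → ℝ := fun A ↦ p * F (insert a A) + (1 - p) * F A with hY
    have hYdiff : ∀ b ∈ s, ∀ A, |Y (insert b A) - Y A| ≤ c b := by
      intro b hb A
      have h₁ := abs_le.1 (hF b (mem_insert_of_mem hb) (insert a A))
      have h₂ := abs_le.1 (hF b (mem_insert_of_mem hb) A)
      rw [Finset.insert_comm] at h₁
      rw [abs_le]
      constructor <;> simp only [hY] <;> nlinarith [hp.1, hp.2]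
    have hcond (A : Finset α) :
        p * Real.exp (subsetMean p s Y - F (insert a A)) +
            (1 - p) * Real.exp (subsetMean p s Y - F A) ≤
          Real.exp (c a ^ 2 / 8) * Real.exp (subsetMean p s Y - Y A) := by
      have hsplit (x : ℝ) : Real.exp (subsetMean p s Y - x) =
          Real.exp (Y A - x) * Real.exp (subsetMean p s Y - Y A) := by
        rw [← Real.exp_add]; ring_nf
      rw [hsplit (F (insert a A)), hsplit (F A), ← mul_assoc, ← mul_assoc, ← add_mul]
      exact mul_le_mul_of_nonneg_right (hoeffding_two_point hp (hF a (mem_insert_self a s) A))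
        (Real.exp_pos _).le
    rw [subsetMean_insert ha, subsetMean_insert ha, sum_insert ha, add_div, Real.exp_add]
    calc _ ≤ subsetMean p s (Real.exp (c a ^ 2 / 8) •
            fun A ↦ Real.exp (subsetMean p s Y - Y A)) := subsetMean_mono hp hcond
      _ = Real.exp (c a ^ 2 / 8) * subsetMean p s fun A ↦ Real.exp (subsetMean p s Y - Y A) := by
          rw [map_smul, smul_eq_mul]
      _ ≤ _ := mul_le_mul_of_nonneg_left (ih hYdiff) (Real.exp_pos _).le

/-- **McDiarmid's inequality**, lower tail. -/
lemma subsetProb_le_mean_sub_le {c : α → ℝ} {t : ℝ} (hp : p ∈ Set.Icc (0 : ℝ) 1) (ht : 0 ≤ t)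
    (hF : ∀ a ∈ s, ∀ A, |F (insert a A) - F A| ≤ c a) :
    subsetProb p s {A | F A ≤ subsetMean p s F - t} ≤
      Real.exp (-(2 * t ^ 2 / ∑ a ∈ s, c a ^ 2)) := by
  set V : ℝ := ∑ a ∈ s, c a ^ 2 with hV
  have hV₀ : 0 ≤ V := sum_nonneg fun a _ ↦ sq_nonneg (c a)
  -- The optimal parameter in the exponential Markov inequality.
  let l : ℝ := 4 * t / V
  have hl : 0 ≤ l := by positivity
  have hmgf := subsetMean_exp_sub_le (F := l • F) (c := l • c) hp fun a ha A ↦ by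
    simpa [← mul_sub, abs_mul, abs_of_nonneg hl] using mul_le_mul_of_nonneg_left (hF a ha A) hl
  calc subsetProb p s {A | F A ≤ subsetMean p s F - t}
      ≤ subsetMean p s (Real.exp (-(l * t)) •
          fun A ↦ Real.exp (subsetMean p s (l • F) - (l • F) A)) := by
        refine subsetMean_mono hp fun A ↦ Set.indicator_apply_le' (fun hA ↦ ?_) fun _ ↦ ?_
        · have hle : l * t ≤ l * (subsetMean p s F - F A) :=
            mul_le_mul_of_nonneg_left (le_sub_comm.1 hA) hl
          simp only [map_smul, Pi.smul_apply, smul_eq_mul, Pi.one_apply, ← Real.exp_add]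
          exact Real.one_le_exp (by linarith)
        · simp only [Pi.smul_apply, smul_eq_mul]
          positivity
    _ ≤ Real.exp (-(l * t)) * Real.exp ((∑ a ∈ s, (l • c) a ^ 2) / 8) := by
        rw [map_smul, smul_eq_mul]
        exact mul_le_mul_of_nonneg_left hmgf (Real.exp_pos _).le
    _ = Real.exp (-(2 * t ^ 2 / V)) := by
        rw [← Real.exp_add]
        simp only [Pi.smul_apply, smul_eq_mul, mul_pow, ← mul_sum, ← hV, l]
        congr 1
        rcases hV₀.eq_or_lt with h | h
        · simp [← h]
        · field_simp
          ring

end RandomSubset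

section Equidistribution

open Finset

/-- A map between finite types is equidistributed if all its fibres have the same size; the
condition is written so that it needs no division. -/
def Equidistributed {H α : Type*} [Fintype H] [Fintype α] (φ : H → α) : Prop :=
  ∀ x, #{h | φ h = x} * Fintype.card α = Fintype.card H

lemma equidistributed_of_surjective {A B : Type*} [AddGroup A] [AddGroup B] [Fintype A] [Fintype B]
    (φ : A →+ B) (hφ : Function.Surjective φ) : Equidistributed φ := fun x ↦ by
  have hfiber (y : B) : #{a | φ a = y} = #{a | φ a = x} :=
    AddMonoidHom.card_fiber_eq_of_mem_range φ (hφ y) (hφ x)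
  have hsum := card_eq_sum_card_fiberwise (f := φ) (s := univ) (t := univ) fun _ _ ↦ by simp
  simp only [hfiber, sum_const, card_univ, smul_eq_mul] at hsum
  rw [hsum, mul_comm]

lemma Equidistributed.const_add {H B : Type*} [Fintype H] [AddGroup B] [Fintype B] {φ : H → B}
    (hφ : Equidistributed φ) (g : B) : Equidistributed fun h ↦ g + φ h := fun x ↦ by
  simpa only [← eq_neg_add_iff_add_eq] using hφ (-g + x)

variable {ι H α : Type*} [Fintype ι] [Fintype H]

lemma abs_card_forall_mem_insert_sub_le (φ : ι → H → α) (a : α) (A : Finset α) :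
    |(#{h | ∀ j, φ j h ∈ insert a A} : ℝ) - #{h | ∀ j, φ j h ∈ A}| ≤
      ∑ j, (#{h | φ j h = a} : ℝ) := by
  have hle : #{h | ∀ j, φ j h ∈ A} ≤ #{h | ∀ j, φ j h ∈ insert a A} :=
    card_le_card <| monotone_filter_right _ fun h _ hA j ↦ mem_insert_of_mem (hA j)
  have hsub : ({h | ∀ j, φ j h ∈ insert a A} : Finset H) ⊆
      ({h | ∀ j, φ j h ∈ A} : Finset H) ∪ univ.biUnion fun j ↦ {h | φ j h = a} := by
    intro h
    simp only [mem_filter_univ, mem_union, mem_biUnion, mem_univ, true_and, mem_insert]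
    grind
  have hge : #{h | ∀ j, φ j h ∈ insert a A} ≤ #{h | ∀ j, φ j h ∈ A} + ∑ j, #{h | φ j h = a} :=
    (card_le_card hsub).trans <| (card_union_le _ _).trans <| Nat.add_le_add_left card_biUnion_le _
  rw [abs_of_nonneg (sub_nonneg.2 (mod_cast hle)), sub_le_iff_le_add']
  exact_mod_cast hge

variable [Fintype α] {p θ : ℝ}

lemma pow_mul_card_le_subsetMean (φ : ι → H → α) (hp : p ∈ Set.Icc (0 : ℝ) 1) :
    p ^ Fintype.card ι * Fintype.card H ≤
      subsetMean p univ fun R ↦ (#{h | ∀ j, φ j h ∈ R} : ℝ) := by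
  have hcount : (fun R ↦ (#{h | ∀ j, φ j h ∈ R} : ℝ)) =
      ∑ h : H, {R | univ.image (φ · h) ⊆ R}.indicator 1 := by
    ext R
    simp [Set.indicator_apply, image_subset_iff]
  rw [hcount, map_sum, mul_comm, ← nsmul_eq_mul, ← card_univ]
  refine card_nsmul_le_sum _ _ _ fun h _ ↦ ?_
  calc p ^ Fintype.card ι ≤ p ^ #(univ.image (φ · h)) :=
        pow_le_pow_of_le_one hp.1 hp.2 card_image_le
    _ = _ := (subsetProb_superset (subset_univ _)).symm

lemma subsetProb_card_forall_mem_le_le [Nonempty H] (φ : ι → H → α)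
    (hφ : ∀ j, Equidistributed (φ j)) (hp : p ∈ Set.Icc (0 : ℝ) 1) (hθ : 0 ≤ θ) :
    subsetProb p univ {R | (#{h | ∀ j, φ j h ∈ R} : ℝ) ≤
        (1 - θ) * p ^ Fintype.card ι * Fintype.card H} ≤
      Real.exp (-(2 * θ ^ 2 / Fintype.card ι ^ 2 *
        (p ^ (2 * Fintype.card ι) * Fintype.card α))) := by
  let X : Finset α → ℝ := fun R ↦ #{h | ∀ j, φ j h ∈ R}
  set μ := p ^ Fintype.card ι * Fintype.card H with hμ
  have hμ₀ : 0 ≤ μ := mul_nonneg (pow_nonneg hp.1 _) (Nat.cast_nonneg _)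
  have hfiber (j : ι) (a : α) : (#{h | φ j h = a} : ℝ) = Fintype.card H / Fintype.card α := by
    have : Nonempty α := ⟨a⟩
    rw [eq_div_iff (Nat.cast_ne_zero.2 Fintype.card_ne_zero)]
    exact_mod_cast hφ j a
  have hdiff : ∀ a ∈ univ, ∀ A, |X (insert a A) - X A| ≤
      Fintype.card ι * (Fintype.card H / Fintype.card α) := fun a _ A ↦
    (abs_card_forall_mem_insert_sub_le φ a A).trans_eq (by simp [hfiber])
  refine (subsetProb_mono hp fun R hR ↦ ?_).trans
    ((subsetProb_le_mean_sub_le hp (mul_nonneg hθ hμ₀) hdiff).trans_eq ?_)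
  · have hmean : μ ≤ subsetMean p univ X := pow_mul_card_le_subsetMean φ hp
    simp only [Set.mem_ofPred_eq, X] at hR hmean ⊢
    linarith
  · rw [sum_const, card_univ, nsmul_eq_mul, hμ]
    congr 2
    rcases eq_or_ne (Fintype.card ι) 0 with hι | hι
    · simp [hι]
    rcases eq_or_ne (Fintype.card α) 0 with hα | hα
    · simp [hα]
    field_simp
    ring

lemma le_subsetProb_forall_lt_card_forall_mem [Nonempty H] {T : Type*} (I : Finset T)
    (φ : T → ι → H → α) (hφ : ∀ t ∈ I, ∀ j, Equidistributed (φ t j))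
    (hp : p ∈ Set.Icc (0 : ℝ) 1) (hθ : 0 ≤ θ) :
    1 - #I * Real.exp (-(2 * θ ^ 2 / Fintype.card ι ^ 2 *
        (p ^ (2 * Fintype.card ι) * Fintype.card α))) ≤
      subsetProb p univ {R | ∀ t ∈ I,
        (1 - θ) * p ^ Fintype.card ι * Fintype.card H < #{h | ∀ j, φ t j h ∈ R}} := by
  have hcompl : {R : Finset α | ∀ t ∈ I,
      (1 - θ) * p ^ Fintype.card ι * Fintype.card H < #{h | ∀ j, φ t j h ∈ R}} =
      (⋃ t ∈ I, {R | (#{h | ∀ j, φ t j h ∈ R} : ℝ) ≤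
        (1 - θ) * p ^ Fintype.card ι * Fintype.card H})ᶜ := by
    ext R
    simp
  rw [hcompl, subsetProb_compl, ← nsmul_eq_mul]
  exact sub_le_sub_left ((subsetProb_biUnion_le hp I _).trans
    (sum_le_card_nsmul _ _ _ fun t ht ↦ subsetProb_card_forall_mem_le_le (φ t) (hφ t ht) hp hθ)) 1

lemma mul_card_lt_card_filter_of_forall_translate {F : Type*} [AddGroup F] [Fintype F]
    {P : F → Prop} [DecidablePred P] {a : ℝ} (τ : H → F)
    (h : ∀ f, a * Fintype.card H < #{h | P (f + τ h)}) :
    a * Fintype.card F < #{f | P f} := by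
  have hswap : ∑ f : F, #{h | P (f + τ h)} = Fintype.card H * #{f | P f} := by
    have hshift (h : H) : #{f | P (f + τ h)} = #{f | P f} :=
      card_equiv (Equiv.addRight (τ h)) (by simp)
    simpa only [bipartiteAbove, bipartiteBelow, hshift, sum_const, card_univ, smul_eq_mul] using
      sum_card_bipartiteAbove_eq_sum_card_bipartiteBelow (s := (univ : Finset F))
        (t := (univ : Finset H)) fun f h ↦ P (f + τ h)
  refine lt_of_mul_lt_mul_left (a := (Fintype.card H : ℝ)) ?_ (Nat.cast_nonneg _)
  calc Fintype.card H * (a * Fintype.card F) = ∑ _f : F, a * (Fintype.card H : ℝ) := by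
        rw [sum_const, card_univ, nsmul_eq_mul]; ring
    _ < ∑ f : F, (#{h | P (f + τ h)} : ℝ) := sum_lt_sum_of_nonempty univ_nonempty fun f _ ↦ h f
    _ = Fintype.card H * #{f | P f} := mod_cast hswap

end Equidistribution

section Words

open Finset Matrix

variable {G : Type} {k m : ℕ} {R : Finset G}

/-- A word is linear if some variable has coefficient `1` or `-1` in it. -/
def IsLinear (w : G × (Fin k → ℤ)) : Prop :=
  ∃ i, w.2 i = 1 ∨ w.2 i = -1

lemma IsLinear.exists_dotProduct_eq_one {w : G × (Fin k → ℤ)} (hw : IsLinear w) :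
    ∃ u, w.2 ⬝ᵥ u = 1 := by
  obtain ⟨i, hi⟩ := hw
  refine ⟨Pi.single i (w.2 i), ?_⟩
  rw [dotProduct_single]
  rcases hi with hi | hi <;> simp [hi]

/-- The words whose coefficients are residues modulo `|G|`; they have the same projections as all
words. -/
noncomputable def reducedWords (G : Type) [Fintype G] (k : ℕ) : Finset (G × (Fin k → ℤ)) :=
  univ ×ˢ Fintype.piFinset fun _ ↦ Ico 0 (Fintype.card G : ℤ)

lemma card_reducedWords [Fintype G] : #(reducedWords G k) = Fintype.card G ^ (k + 1) := by
  simp [reducedWords, pow_succ']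

variable [AddCommGroup G]

lemma Separable.constant_or_exists_dotProduct_eq_one {w w' : G × (Fin k → ℤ)}
    (h : Separable w w') :
    ((w - w').2 = 0 ∧ (w - w').1 ≠ 0) ∨ ∃ u, (w - w').2 ⬝ᵥ u = 1 := by
  rcases h with hlin | hconst | ⟨i, j, hij, hz | hz⟩
  · exact .inr (IsLinear.exists_dotProduct_eq_one hlin)
  · exact .inl hconst
  · exact .inr ⟨Pi.single i 1 + Pi.single j 1, by simp [hz, hij, hij.symm]⟩
  · exact .inr ⟨-(Pi.single i 1 + Pi.single j 1), by simp [hz, hij, hij.symm]⟩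

lemma proj_sub (f : Fin k → G) (w w' : G × (Fin k → ℤ)) :
    proj f (w - w') = proj f w - proj f w' := by
  simp only [proj, Prod.fst_sub, Prod.snd_sub, Pi.sub_apply, sub_smul, sum_sub_distrib]
  abel

lemma proj_add_sum_single (f : Fin k → G) (c : Fin m → Fin k) (h : Fin m → G)
    (w : G × (Fin k → ℤ)) :
    proj (f + ∑ l, Pi.single (c l) (h l)) w = proj h (proj f w, fun l ↦ w.2 (c l)) := by
  have hsingle (l : Fin m) :
      ∑ i, w.2 i • (Pi.single (c l) (h l) : Fin k → G) i = w.2 (c l) • h l := by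
    rw [sum_eq_single (c l) (fun i _ hi ↦ by simp [hi]) (by simp), Pi.single_eq_same]
  simp only [proj, Pi.add_apply, Finset.sum_apply, smul_add, smul_sum, sum_add_distrib, add_assoc]
  rw [sum_comm]
  simp only [hsingle]

variable [Fintype G]

lemma proj_emod_card (f : Fin k → G) (w : G × (Fin k → ℤ)) :
    proj f (w.1, fun i ↦ w.2 i % Fintype.card G) = proj f w := by
  simp [proj, mod_card_zsmul]

lemma equidistributed_proj {w : G × (Fin k → ℤ)} {u : Fin k → ℤ} (h : w.2 ⬝ᵥ u = 1) :
    Equidistributed fun f : Fin k → G ↦ proj f w := by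
  let φ : (Fin k → G) →+ G := ∑ i, w.2 i • Pi.evalAddMonoidHom _ i
  have hφ (f : Fin k → G) : φ f = ∑ i, w.2 i • f i := by simp [φ]
  have hsurj : Function.Surjective φ := fun x ↦ ⟨fun i ↦ u i • x, by
    simp_rw [hφ, smul_smul, ← sum_smul]
    exact (congrArg (· • x) h).trans (one_zsmul x)⟩
  simpa only [proj, hφ] using (equidistributed_of_surjective φ hsurj).const_add w.1

lemma card_proj_eq_proj_mul_card_le {w w' : G × (Fin k → ℤ)} (h : Separable w w') :
    #{f : Fin k → G | proj f w = proj f w'} * Fintype.card G ≤ Fintype.card (Fin k → G) := by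
  simp only [← sub_eq_zero (a := proj _ w), ← proj_sub]
  rcases h.constant_or_exists_dotProduct_eq_one with ⟨hz, hg⟩ | ⟨u, hu⟩
  · simp [proj, hz, show w.1 - w'.1 ≠ 0 from hg]
  · exact (equidistributed_proj hu 0).le

lemma card_not_separatesSet_mul_card_le (S : Finset (G × (Fin k → ℤ))) :
    #{f : Fin k → G | ¬ SeparatesSet f S} * Fintype.card G ≤
      #S ^ 2 * Fintype.card (Fin k → G) := by
  have hsub : ({f | ¬ SeparatesSet f S} : Finset (Fin k → G)) ⊆
      ((S ×ˢ S).filter fun q ↦ Separable q.1 q.2).biUnion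
        fun q ↦ {f | proj f q.1 = proj f q.2} := by
    intro f
    simp only [SeparatesSet, mem_biUnion, mem_filter, mem_product, Prod.exists]
    grind
  calc #{f : Fin k → G | ¬ SeparatesSet f S} * Fintype.card G
      ≤ ∑ q ∈ S ×ˢ S with Separable q.1 q.2,
          #{f : Fin k → G | proj f q.1 = proj f q.2} * Fintype.card G := by
        rw [← sum_mul]
        exact Nat.mul_le_mul_right _ ((card_le_card hsub).trans card_biUnion_le)
    _ ≤ #{q ∈ S ×ˢ S | Separable q.1 q.2} • Fintype.card (Fin k → G) :=
        sum_le_card_nsmul _ _ _ fun q hq ↦ card_proj_eq_proj_mul_card_le (mem_filter.1 hq).2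
    _ ≤ #S ^ 2 * Fintype.card (Fin k → G) := by
        rw [smul_eq_mul, sq, ← card_product]
        exact Nat.mul_le_mul_right _ (card_filter_le _ _)

lemma card_exists_proj_mem_mul_card_le {S : Finset (G × (Fin k → ℤ))}
    (hlin : ∀ w ∈ S, IsLinear w) (U : Finset G) :
    #{f : Fin k → G | ∃ w ∈ S, proj f w ∈ U} * Fintype.card G ≤
      #S * #U * Fintype.card (Fin k → G) := by
  have hsub : ({f | ∃ w ∈ S, proj f w ∈ U} : Finset (Fin k → G)) ⊆
      (S ×ˢ U).biUnion fun q ↦ {f | proj f q.1 = q.2} := by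
    intro f
    simp only [mem_filter_univ, mem_biUnion, mem_product, Prod.exists]
    grind
  calc #{f : Fin k → G | ∃ w ∈ S, proj f w ∈ U} * Fintype.card G
      ≤ ∑ q ∈ S ×ˢ U, #{f : Fin k → G | proj f q.1 = q.2} * Fintype.card G := by
        rw [← sum_mul]
        exact Nat.mul_le_mul_right _ ((card_le_card hsub).trans card_biUnion_le)
    _ ≤ #(S ×ˢ U) • Fintype.card (Fin k → G) := sum_le_card_nsmul _ _ _ fun q hq ↦ by
        obtain ⟨u, hu⟩ := (hlin q.1 (mem_product.1 hq).1).exists_dotProduct_eq_one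
        exact (equidistributed_proj hu q.2).le
    _ = #S * #U * Fintype.card (Fin k → G) := by rw [smul_eq_mul, card_product]

/-- `R` captures the `m`-tuples of linear words in `k` variables with density above `a` if each
such tuple is mapped into `R` by more than a proportion `a` of the functions `Fin k → G`. -/
def CapturesTuples (m k : ℕ) (a : ℝ) (R : Finset G) : Prop :=
  ∀ w : Fin m → G × (Fin k → ℤ), (∀ j, IsLinear (w j)) →
    a * Fintype.card (Fin k → G) < #{f : Fin k → G | ∀ j, proj f (w j) ∈ R}

lemma CapturesTuples.of_self {a : ℝ} (hR : CapturesTuples m m a R) : CapturesTuples m k a R := by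
  intro w hw
  choose c hc using hw
  -- Varying `f` only in the variables `c 0, …, c (m - 1)` projects the words like linear words in
  -- `m` variables; two words may share such a variable, which does no harm.
  refine mul_card_lt_card_filter_of_forall_translate (P := fun f ↦ ∀ j, proj f (w j) ∈ R)
    (fun h : Fin m → G ↦ ∑ l, Pi.single (c l) (h l)) fun f ↦ ?_
  have hf := hR (fun j ↦ (proj f (w j), fun l ↦ (w j).2 (c l))) fun j ↦ ⟨j, hc j⟩
  simpa only [proj_add_sum_single] using hf

/-- `R` has gadgets for `m` words and forbidden sets of size `b` if every set of at most `m`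
linear words, in any number of variables, has a separating projection into `R` that avoids a given
set of at most `b` elements. -/
def HasGadgets (m : ℕ) (b : ℝ) (R : Finset G) : Prop :=
  ∀ k, ∀ S : Finset (G × (Fin k → ℤ)), #S ≤ m → (∀ w ∈ S, IsLinear w) →
    ∀ U : Finset G, (#U : ℝ) ≤ b →
      ∃ f : Fin k → G, SeparatesSet f S ∧ (∀ w ∈ S, proj f w ∉ U) ∧ ∀ w ∈ S, proj f w ∈ R

lemma CapturesTuples.lt_card_forall_mem {a : ℝ} (hR : CapturesTuples m k a R)
    {S : Finset (G × (Fin k → ℤ))} (hS : S.Nonempty) (hSm : #S ≤ m) (hlin : ∀ w ∈ S, IsLinear w) :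
    a * Fintype.card (Fin k → G) < #{f : Fin k → G | ∀ w ∈ S, proj f w ∈ R} := by
  obtain ⟨e⟩ : Nonempty (S ↪ Fin m) := Function.Embedding.nonempty_of_card_le (by simpa using hSm)
  have := hS.to_subtype
  have : Nonempty (Fin m) := this.map e
  obtain ⟨w, hw⟩ : ∃ w : Fin m → S, Function.Surjective w :=
    ⟨_, Function.invFun_surjective e.injective⟩
  simpa only [hw.forall, Subtype.forall'] using hR (fun j ↦ w j) fun j ↦ hlin _ (w j).2

lemma CapturesTuples.hasGadgets {a b : ℝ} (hR : CapturesTuples m m a R)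
    (hab : m ^ 2 + m * b ≤ a * Fintype.card G) : HasGadgets m b R := by
  intro k S hSm hlin U hU
  rcases S.eq_empty_or_nonempty with rfl | hS
  · exact ⟨0, by simp [SeparatesSet]⟩
  by_contra! hnone
  have hsub : ({f | ∀ w ∈ S, proj f w ∈ R} : Finset (Fin k → G)) ⊆
      ({f | ¬ SeparatesSet f S} : Finset (Fin k → G)) ∪
        ({f | ∃ w ∈ S, proj f w ∈ U} : Finset (Fin k → G)) := by
    intro f
    simp only [mem_filter_univ, mem_union]
    grind
  have hbad : #{f : Fin k → G | ∀ w ∈ S, proj f w ∈ R} * Fintype.card G ≤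
      (#S ^ 2 + #S * #U) * Fintype.card (Fin k → G) := by
    grw [hsub, card_union_le, add_mul, add_mul, card_not_separatesSet_mul_card_le,
      card_exists_proj_mem_mul_card_le hlin]
  have hfew : (#S : ℝ) ^ 2 + #S * #U ≤ a * Fintype.card G := by
    refine le_trans ?_ hab
    gcongr
  have hlt := hR.of_self.lt_card_forall_mem hS hSm hlin
  refine hbad.not_gt ?_
  rw [← Nat.cast_lt (α := ℝ)]
  push_cast
  calc _ ≤ a * Fintype.card G * Fintype.card (Fin k → G) := by gcongr
    _ < _ := by rw [mul_right_comm]; gcongr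

lemma exists_mem_reducedWords (w : G × (Fin k → ℤ)) :
    ∃ w' ∈ reducedWords G k, ∀ f, proj f w' = proj f w := by
  have hn : (0 : ℤ) < Fintype.card G := Nat.cast_pos.2 Fintype.card_pos
  refine ⟨(w.1, fun i ↦ w.2 i % Fintype.card G), ?_, fun f ↦ proj_emod_card f w⟩
  simp [reducedWords, Int.emod_nonneg _ hn.ne', Int.emod_lt_of_pos _ hn]

lemma le_subsetProb_capturesTuples {p θ : ℝ} (hp : p ∈ Set.Icc (0 : ℝ) 1) (hθ : 0 ≤ θ) :
    1 - (Fintype.card G : ℝ) ^ ((k + 1) * m) *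
        Real.exp (-(2 * θ ^ 2 / m ^ 2 * (p ^ (2 * m) * Fintype.card G))) ≤
      subsetProb p univ {R : Finset G | CapturesTuples m k ((1 - θ) * p ^ m) R} := by
  let I : Finset (Fin m → G × (Fin k → ℤ)) :=
    {w ∈ Fintype.piFinset fun _ ↦ reducedWords G k | ∀ j, Equidistributed fun f ↦ proj f (w j)}
  have hI : (#I : ℝ) ≤ (Fintype.card G : ℝ) ^ ((k + 1) * m) := by
    exact_mod_cast (card_filter_le _ _).trans_eq (by simp [card_reducedWords, pow_mul])
  have hmany := le_subsetProb_forall_lt_card_forall_mem I (fun w j f ↦ proj f (w j))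
    (fun w hw ↦ (mem_filter.1 hw).2) hp hθ
  simp only [Fintype.card_fin] at hmany
  refine (sub_le_sub_left (mul_le_mul_of_nonneg_right hI (Real.exp_pos _).le) 1).trans
    (hmany.trans (subsetProb_mono hp fun R hR w hw ↦ ?_))
  choose w' hw' hproj using fun j ↦ exists_mem_reducedWords (w j)
  have hw'I : w' ∈ I := by
    refine mem_filter.2 ⟨Fintype.mem_piFinset.2 hw', fun j ↦ ?_⟩
    obtain ⟨u, hu⟩ := (hw j).exists_dotProduct_eq_one
    simpa only [hproj] using equidistributed_proj hu
  simpa only [hproj] using hR w' hw'I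

end Words

section Asymptotics

open Filter Topology

lemma rpow_one_sub_div_le {x p K : ℝ} (hx : 0 < x) (hxp : x ^ (-(1 : ℝ) / K) ≤ p) (e : ℕ) :
    x ^ (1 - e / K) ≤ p ^ e * x := by
  calc x ^ (1 - e / K) = (x ^ (-(1 : ℝ) / K)) ^ e * x := by
        rw [← Real.rpow_natCast, ← Real.rpow_mul hx.le, ← Real.rpow_add_one hx.ne']
        congr 1
        ring
    _ ≤ p ^ e * x := by gcongr

lemma tendsto_pow_mul_exp_neg_mul_rpow {b c : ℝ} (hb : 0 < b) (hc : 0 < c) (d : ℕ) :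
    Tendsto (fun x : ℝ ↦ x ^ d * Real.exp (-(b * x ^ c))) atTop (𝓝 0) := by
  refine ((tendsto_rpow_mul_exp_neg_mul_atTop_nhds_zero (d / c) b hb).comp
    (tendsto_rpow_atTop hc)).congr' ?_
  filter_upwards [eventually_ge_atTop 0] with x hx
  rw [Function.comp_apply, ← Real.rpow_mul hx, mul_div_cancel₀ _ hc.ne', Real.rpow_natCast,
    neg_mul]

end Asymptotics

theorem gadget_finding_general {m : ℕ} {K C δ : ℝ} (hm : 0 < m) (hK : 2 * m < K) (hC : m < C)
    (hδ : 0 < δ) : ∃ N : ℕ, ∀ (G : Type) [AddCommGroup G] [Fintype G] (p : ℝ),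
      N ≤ Fintype.card G → (Fintype.card G : ℝ) ^ (-(1 : ℝ) / K) ≤ p → p ≤ 1 →
      1 - δ ≤ subsetProb p Finset.univ
        {R : Finset G | HasGadgets m (p ^ m * Fintype.card G / C) R} := by
  have hm₀ : (0 : ℝ) < m := Nat.cast_pos.2 hm
  have hK₀ : 0 < K := by linarith
  have hC₀ : 0 < C := hm₀.trans hC
  obtain ⟨θ, hθ₀, hθ⟩ : ∃ θ, 0 < θ ∧ 2 * θ = 1 - m / C :=
    ⟨(1 - m / C) / 2, half_pos (sub_pos.2 ((div_lt_one hC₀).2 hC)), by ring⟩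
  have hmK : 0 < 1 - m / K := sub_pos.2 ((div_lt_one hK₀).2 (by linarith))
  have h2mK : 0 < 1 - (2 * m : ℕ) / K := sub_pos.2 ((div_lt_one hK₀).2 (by exact_mod_cast hK))
  obtain ⟨N, hN⟩ := Filter.eventually_atTop.1 <| tendsto_natCast_atTop_atTop.eventually <|
    ((tendsto_rpow_atTop hmK).eventually_ge_atTop ((m : ℝ) ^ 2 / θ)).and <|
    (tendsto_pow_mul_exp_neg_mul_rpow (b := 2 * θ ^ 2 / m ^ 2) (by positivity) h2mK
      ((m + 1) * m)).eventually (ge_mem_nhds hδ)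
  refine ⟨N, fun G _ _ p hG hnp hp₁ ↦ ?_⟩
  obtain ⟨hmean, hfail⟩ := hN _ hG
  have hn : (0 : ℝ) < Fintype.card G := Nat.cast_pos.2 Fintype.card_pos
  have hp : p ∈ Set.Icc (0 : ℝ) 1 := ⟨(Real.rpow_nonneg hn.le _).trans hnp, hp₁⟩
  have hlarge : (m : ℝ) ^ 2 ≤ θ * (p ^ m * Fintype.card G) :=
    (div_le_iff₀' hθ₀).1 (hmean.trans (rpow_one_sub_div_le hn hnp m))
  calc 1 - δ
      ≤ 1 - (Fintype.card G : ℝ) ^ ((m + 1) * m) *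
          Real.exp (-(2 * θ ^ 2 / m ^ 2 * (p ^ (2 * m) * Fintype.card G))) := by
        grw [← rpow_one_sub_div_le hn hnp (2 * m), hfail]
    _ ≤ subsetProb p Finset.univ {R : Finset G | CapturesTuples m m ((1 - θ) * p ^ m) R} :=
        le_subsetProb_capturesTuples hp hθ₀.le
    _ ≤ _ := subsetProb_mono hp fun R hR ↦ CapturesTuples.hasGadgets hR <| by
        linear_combination hlarge + p ^ m * Fintype.card G * hθ

/-- Gadget finding in random sets: with high probability, for every small family of
words linear in at least one variable and every small forbidden set `U`, there is a
separating projection avoiding `U` whose image lies in the random set. -/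
theorem gadget_finding :
    ∀ δ : ℝ, 0 < δ → ∃ N : ℕ,
      ∀ (G : Type) [AddCommGroup G] [Fintype G] [DecidableEq G], ∀ p : ℝ,
      N ≤ Fintype.card G →
      (Fintype.card G : ℝ) ^ (-(1 : ℝ) / 700) ≤ p → p ≤ 1 →
      1 - δ ≤ ∑ R : Finset G,
        (if (∀ k : ℕ, 1 ≤ k →
              ∀ S : Finset (G × (Fin k → ℤ)), S.card ≤ 100 →
              (∀ w ∈ S, ∃ i, w.2 i = 1 ∨ w.2 i = -1) →
              ∀ U : Finset G,
              ((U.card : ℝ) ≤ p ^ 100 * Fintype.card G / 1000) →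
              ∃ f : Fin k → G, SeparatesSet f S ∧
                (∀ w ∈ S, proj f w ∉ U) ∧ (∀ w ∈ S, proj f w ∈ R))
        then setProb G p R else 0) := by
  intro δ hδ
  obtain ⟨N, hN⟩ :=
    gadget_finding_general (m := 100) (K := 700) (C := 1000) (by norm_num) (by norm_num)
      (by norm_num) hδ
  refine ⟨N, fun G _ _ _ p hG hnp hp₁ ↦ ?_⟩
  have hp : p ∈ Set.Icc (0 : ℝ) 1 := ⟨(Real.rpow_nonneg (Nat.cast_nonneg _) _).trans hnp, hp₁⟩
  rw [sum_ite_setProb]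
  exact (hN G p hG hnp hp₁).trans (subsetProb_mono hp fun R hR k _ ↦ hR k)
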